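/- Under the stated hypotheses, if the convex hull K(σ) of σ does not intersect Σ and ‖V‖ < √2·d, then ‖E_A(σ) − E_B(O_d(σ))‖ ≤ sin(arctan(‖V‖/(d − δ_V))) < 1. -/

import Mathlib

/-- `E` is the projection-valued spectral measure of the bounded self-adjoint operator `T`
on the complex Hilbert space `H`: each `E Δ` (for Borel `Δ ⊆ ℝ`) is an orthogonal
projection, `E` is multiplicative and countably additive (in the strong sense), `E ℝ = 1`,
each `E Δ` commutes with `T`, and on the range of `E Δ` the operator `T` has its
approximate point spectrum inside the closure of `Δ` (which uniquely characterizes the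
spectral measure of `T`). -/
structure IsSpectralMeasure {H : Type*} [NormedAddCommGroup H] [InnerProductSpace ℂ H]
    [CompleteSpace H] (T : H →L[ℂ] H) (E : Set ℝ → H →L[ℂ] H) : Prop where
  isSelfAdjoint : ∀ Δ : Set ℝ, MeasurableSet Δ → IsSelfAdjoint (E Δ)
  map_inter : ∀ Δ₁ Δ₂ : Set ℝ, MeasurableSet Δ₁ → MeasurableSet Δ₂ →
    E Δ₁ * E Δ₂ = E (Δ₁ ∩ Δ₂)
  map_univ : E Set.univ = 1
  countably_additive : ∀ Δ : ℕ → Set ℝ, (∀ n, MeasurableSet (Δ n)) →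
    Pairwise (Function.onFun Disjoint Δ) →
    ∀ x : H, HasSum (fun n => E (Δ n) x) (E (⋃ n, Δ n) x)
  commutes : ∀ Δ : Set ℝ, MeasurableSet Δ → Commute T (E Δ)
  spectrum_loc : ∀ Δ : Set ℝ, MeasurableSet Δ → ∀ x : H, E Δ x = x →
    ∀ μ : ℝ, Metric.infDist μ Δ * ‖x‖ ≤ ‖T x - (μ : ℂ) • x‖

section StarProjection

variable {H : Type*} [NormedAddCommGroup H] [InnerProductSpace ℂ H] [CompleteSpace H]

theorem IsSelfAdjoint.inner_apply_left {T : H →L[ℂ] H} (hT : IsSelfAdjoint T) (x y : H) :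
    inner ℂ (T x) y = inner ℂ x (T y) :=
  hT.isSymmetric x y

namespace IsStarProjection

variable {P Q : H →L[ℂ] H}

theorem apply_apply (hP : IsStarProjection P) (x : H) : P (P x) = P x :=
  congrArg (fun T : H →L[ℂ] H => T x) hP.isIdempotentElem.eq

theorem inner_apply_sub_apply (hP : IsStarProjection P) (x y : H) :
    inner ℂ (P x) (y - P y) = 0 := by
  rw [hP.isSelfAdjoint.inner_apply_left, map_sub, hP.apply_apply, sub_self, inner_zero_right]

theorem norm_sq_add_norm_sq (hP : IsStarProjection P) (x : H) :
    ‖P x‖ ^ 2 + ‖x - P x‖ ^ 2 = ‖x‖ ^ 2 := by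
  have h := norm_add_sq_eq_norm_sq_add_norm_sq_of_inner_eq_zero (𝕜 := ℂ) _ _
    (hP.inner_apply_sub_apply x x)
  rw [add_sub_cancel] at h
  linarith

theorem norm_apply_le (hP : IsStarProjection P) (x : H) : ‖P x‖ ≤ ‖x‖ := by
  have := hP.norm_sq_add_norm_sq x
  exact abs_le_of_sq_le_sq' (by nlinarith [sq_nonneg ‖x - P x‖]) (norm_nonneg x) |>.2

theorem norm_sub_apply_le (hP : IsStarProjection P) (x : H) : ‖x - P x‖ ≤ ‖x‖ := by
  have := hP.norm_sq_add_norm_sq x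
  exact abs_le_of_sq_le_sq' (by nlinarith [sq_nonneg ‖P x‖]) (norm_nonneg x) |>.2

/-- The norm of a difference of two orthogonal projections is controlled by the two
one-sided gaps between their ranges. -/
theorem norm_sub_le (hP : IsStarProjection P) (hQ : IsStarProjection Q) {s : ℝ} (hs : 0 ≤ s)
    (h₁ : ‖(1 - P) * Q‖ ≤ s) (h₂ : ‖(1 - Q) * P‖ ≤ s) : ‖P - Q‖ ≤ s := by
  have h₂' : ‖P * (1 - Q)‖ ≤ s := by
    rw [← norm_star, star_mul, hP.isSelfAdjoint.star_eq, hQ.one_sub.isSelfAdjoint.star_eq]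
    exact h₂
  refine ContinuousLinearMap.opNorm_le_bound _ hs fun x => ?_
  have e₁ : P ((P - Q) x) = (P * (1 - Q)) ((1 - Q) x) := by
    simp [hP.apply_apply, hQ.apply_apply]
  have e₂ : (P - Q) x - P ((P - Q) x) = -(((1 - P) * Q) (Q x)) := by
    simp [hP.apply_apply, hQ.apply_apply]
  have n₁ : ‖P ((P - Q) x)‖ ≤ s * ‖x - Q x‖ := by
    rw [e₁]
    exact ((P * (1 - Q)).le_of_opNorm_le h₂' _)
  have n₂ : ‖(P - Q) x - P ((P - Q) x)‖ ≤ s * ‖Q x‖ := by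
    rw [e₂, norm_neg]
    exact (((1 - P) * Q).le_of_opNorm_le h₁ _)
  have hp := hP.norm_sq_add_norm_sq ((P - Q) x)
  have hq := hQ.norm_sq_add_norm_sq x
  have m₁ := pow_le_pow_left₀ (norm_nonneg _) n₁ 2
  have m₂ := pow_le_pow_left₀ (norm_nonneg _) n₂ 2
  refine (abs_le_of_sq_le_sq' ?_ (by positivity)).2
  rw [← hp, mul_pow, ← hq]
  linarith [mul_pow s ‖x - Q x‖ 2, mul_pow s ‖Q x‖ 2]

/-- If two orthogonal projections are at distance less than one, then the two one-sided gaps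
between their ranges agree, and either of them bounds the distance. -/
theorem norm_sub_le_of_norm_sub_lt_one (hP : IsStarProjection P) (hQ : IsStarProjection Q)
    (h : ‖P - Q‖ < 1) : ‖P - Q‖ ≤ ‖(1 - P) * Q‖ := by
  set s := ‖(1 - P) * Q‖ with hs
  refine hP.norm_sub_le hQ (norm_nonneg _) le_rfl ?_
  have hrefl : ‖(P - Q) * (2 * Q - 1)‖ < 1 := by
    refine lt_of_le_of_lt ((norm_mul_le _ _).trans ?_) h
    refine mul_le_of_le_one_right (norm_nonneg _) ?_
    refine ContinuousLinearMap.opNorm_le_bound _ zero_le_one fun x => ?_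
    have e₁ : Q ((2 * Q - 1) x) = Q x := by
      simp [two_mul, hQ.apply_apply]
    have e₂ : (2 * Q - 1) x - Q ((2 * Q - 1) x) = -(x - Q x) := by
      rw [e₁]
      simp only [two_mul, sub_apply, add_apply,
        one_apply_eq_self]
      abel
    have h₁ := hQ.norm_sq_add_norm_sq ((2 * Q - 1) x)
    rw [e₂, e₁, norm_neg, hQ.norm_sq_add_norm_sq] at h₁
    rw [one_mul]
    exact (abs_le_of_sq_le_sq' h₁.ge (norm_nonneg _)).2
  have hunit : IsUnit (1 + (P - Q) * (2 * Q - 1)) := by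
    have := isUnit_one_sub_of_norm_lt_one (x := -((P - Q) * (2 * Q - 1)))
      (by rwa [norm_neg])
    rwa [sub_neg_eq_add] at this
  refine ContinuousLinearMap.opNorm_le_bound _ (norm_nonneg _) fun x => ?_
  obtain ⟨W, hW⟩ := hunit.exists_right_inv
  have hPQ : P * (1 + (P - Q) * (2 * Q - 1)) = P * Q := by
    have hp := hP.isIdempotentElem.eq
    have hq := hQ.isIdempotentElem.eq
    calc _ = P + 2 * ((P * P) * Q) - P * P - 2 * (P * (Q * Q)) + P * Q := by noncomm_ring
      _ = P * Q := by rw [hp, hq]; noncomm_ring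
  set y := Q (W (P x)) with hy
  have hPy : P y = P x := by
    have h₁ : P * Q * W = P := by rw [← hPQ, mul_assoc, hW, mul_one]
    have h₂ := congrArg (fun T : H →L[ℂ] H => T (P x)) h₁
    simpa [hP.apply_apply] using h₂
  have hQy : Q y = y := hQ.apply_apply _
  have hsy : ‖y - P y‖ ≤ s * ‖y‖ := by
    have := ((1 - P) * Q).le_opNorm y
    simpa [hQy] using this
  have hyn := hP.norm_sq_add_norm_sq y
  rw [hPy] at hyn hsy
  have hinner : ‖P x‖ ^ 2 ≤ ‖Q (P x)‖ * ‖y‖ := by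
    have h₁ : inner ℂ (Q (P x)) y = inner ℂ (P x) (P x) := by
      rw [hQ.isSelfAdjoint.inner_apply_left, hQy]
      nth_rewrite 1 [← hP.apply_apply x]
      rw [hP.isSelfAdjoint.inner_apply_left, hPy]
    have h₂ := norm_inner_le_norm (𝕜 := ℂ) (Q (P x)) y
    rw [h₁, inner_self_eq_norm_sq_to_K] at h₂
    simpa using h₂
  have hQP := hQ.norm_sq_add_norm_sq (P x)
  have hgoal : ‖P x - Q (P x)‖ ≤ s * ‖P x‖ := by
    have hs0 : 0 ≤ s := norm_nonneg _
    rcases eq_or_lt_of_le (norm_nonneg (P x)) with h0 | h0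
    · have : P x = 0 := norm_eq_zero.1 h0.symm
      simp [this]
    have m := pow_le_pow_left₀ (norm_nonneg _) hsy 2
    have m' := pow_le_pow_left₀ (sq_nonneg _) hinner 2
    refine (abs_le_of_sq_le_sq' ?_ (by positivity)).2
    have hy0 : 0 < ‖y‖ ^ 2 := by
      have := sq_nonneg ‖y - P x‖
      have := pow_pos h0 2
      linarith
    have hlow : (1 - s ^ 2) * ‖y‖ ^ 2 ≤ ‖P x‖ ^ 2 := by nlinarith
    have : (1 - s ^ 2) * ‖P x‖ ^ 2 ≤ ‖Q (P x)‖ ^ 2 := by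
      refine le_of_mul_le_mul_right ?_ hy0
      nlinarith [mul_le_mul_of_nonneg_right hlow (sq_nonneg ‖P x‖)]
    nlinarith
  calc ‖((1 - Q) * P) x‖ = ‖P x - Q (P x)‖ := by simp
    _ ≤ s * ‖P x‖ := hgoal
    _ ≤ s * ‖x‖ := mul_le_mul_of_nonneg_left (hP.norm_apply_le x) (norm_nonneg _)

end IsStarProjection

end StarProjection

section Spectrum

variable {H : Type*} [NormedAddCommGroup H] [InnerProductSpace ℂ H] [CompleteSpace H]

theorem IsSelfAdjoint.isUnit_of_le_norm_apply {T : H →L[ℂ] H} (hT : IsSelfAdjoint T) {c : ℝ}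
    (hc : 0 < c) (h : ∀ x, c * ‖x‖ ≤ ‖T x‖) : IsUnit T := by
  have hanti : AntilipschitzWith (Real.toNNReal c)⁻¹ T := by
    refine ContinuousLinearMap.antilipschitz_of_bound _ fun x => ?_
    rw [NNReal.coe_inv, Real.coe_toNNReal c hc.le, inv_mul_eq_div, le_div_iff₀ hc, mul_comm]
    exact h x
  rw [ContinuousLinearMap.isUnit_iff_bijective,
    ContinuousLinearMap.bijective_iff_dense_range_and_antilipschitz]
  refine ⟨?_, _, hanti⟩
  rw [Submodule.topologicalClosure_eq_top_iff, ContinuousLinearMap.orthogonal_range,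
    hT.adjoint_eq]
  exact LinearMap.ker_eq_bot.2 hanti.injective

theorem IsSelfAdjoint.notMem_spectrum_of_le_norm {T : H →L[ℂ] H} (hT : IsSelfAdjoint T)
    {μ c : ℝ} (hc : 0 < c) (h : ∀ x, c * ‖x‖ ≤ ‖T x - (μ : ℂ) • x‖) : μ ∉ spectrum ℝ T := by
  rw [spectrum.notMem_iff]
  have hsa : IsSelfAdjoint (algebraMap ℝ (H →L[ℂ] H) μ - T) :=
    (IsSelfAdjoint.algebraMap _ (IsSelfAdjoint.all μ)).sub hT
  refine hsa.isUnit_of_le_norm_apply hc fun x => ?_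
  rw [sub_apply, norm_sub_rev]
  simpa [Algebra.algebraMap_eq_smul_one] using h x

theorem exists_pos_le_norm_of_notMem_spectrum {H : Type*} [NormedAddCommGroup H]
    [InnerProductSpace ℂ H] {T : H →L[ℂ] H} {μ : ℝ}
    (h : μ ∉ spectrum ℝ T) : ∃ c : ℝ, 0 < c ∧ ∀ x, c * ‖x‖ ≤ ‖T x - (μ : ℂ) • x‖ := by
  rw [spectrum.notMem_iff] at h
  obtain ⟨W, hW⟩ := h.exists_left_inv
  refine ⟨(‖W‖ + 1)⁻¹, by positivity, fun x => ?_⟩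
  rw [inv_mul_le_iff₀ (by positivity)]
  have e : W ((μ : ℂ) • x - T x) = x := by
    have := congrArg (fun S : H →L[ℂ] H => S x) hW
    simpa [Algebra.algebraMap_eq_smul_one] using this
  calc ‖x‖ = ‖W ((μ : ℂ) • x - T x)‖ := by rw [e]
    _ ≤ ‖W‖ * ‖T x - (μ : ℂ) • x‖ := by
      rw [norm_sub_rev (T x)]
      exact W.le_opNorm _
    _ ≤ (‖W‖ + 1) * ‖T x - (μ : ℂ) • x‖ := by gcongr; linarith

theorem IsSelfAdjoint.norm_le_of_spectrum_subset {T : H →L[ℂ] H} (hT : IsSelfAdjoint T)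
    {r : ℝ} (hr : 0 ≤ r) (h : ∀ μ ∈ spectrum ℝ T, |μ| ≤ r) : ‖T‖ ≤ r := by
  have := norm_cfc_le (𝕜 := ℝ) (p := IsSelfAdjoint) (f := fun x => x) (a := T) hr
    (fun x hx => by simpa using h x hx)
  rwa [cfc_id' ℝ T] at this

/-- `Q` is an orthogonal projection reducing `B` such that `B` is bounded by `ρ₁` on the range
of `Q` and bounded below by `ρ₂` on the orthogonal complement. -/
structure SplitsAt (B Q : H →L[ℂ] H) (ρ₁ ρ₂ : ℝ) : Prop where
  isStarProjection : IsStarProjection Q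
  commute : Commute B Q
  norm_le : ∀ x, ‖B (Q x)‖ ≤ ρ₁ * ‖Q x‖
  le_norm : ∀ x, ρ₂ * ‖x - Q x‖ ≤ ‖B (x - Q x)‖

theorem exists_continuous_cutoff {ρ₁ ρ₂ : ℝ} (h12 : ρ₁ < ρ₂) :
    ∃ g : ℝ → ℝ, Continuous g ∧ (∀ x, |x| ≤ ρ₁ → g x = 1) ∧ ∀ x, ρ₂ ≤ |x| → g x = 0 := by
  have hpos : 0 < ρ₂ - ρ₁ := sub_pos.2 h12
  refine ⟨fun x => max 0 (min 1 ((ρ₂ - |x|) / (ρ₂ - ρ₁))), by fun_prop, fun x hx => ?_,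
    fun x hx => ?_⟩
  · have : 1 ≤ (ρ₂ - |x|) / (ρ₂ - ρ₁) := by rw [le_div_iff₀ hpos]; linarith
    simp [this]
  · have : (ρ₂ - |x|) / (ρ₂ - ρ₁) ≤ 0 := div_nonpos_of_nonpos_of_nonneg (by linarith) hpos.le
    simp [this]

/-- A self-adjoint operator whose spectrum avoids `ρ₁ < |μ| < ρ₂` splits accordingly. -/
theorem IsSelfAdjoint.exists_splitsAt {B : H →L[ℂ] H} (hB : IsSelfAdjoint B) {ρ₁ ρ₂ : ℝ}
    (h0 : 0 ≤ ρ₁) (h12 : ρ₁ < ρ₂) (h : ∀ μ ∈ spectrum ℝ B, |μ| ≤ ρ₁ ∨ ρ₂ ≤ |μ|) :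
    ∃ Q, SplitsAt B Q ρ₁ ρ₂ := by
  obtain ⟨g, hgc, hg₁, hg₀⟩ := exists_continuous_cutoff h12
  have hidem : cfc g B * cfc g B = cfc g B := by
    rw [← cfc_mul g g B]
    refine cfc_congr fun x hx => ?_
    rcases h x hx with hx | hx
    · simp [hg₁ x hx]
    · simp [hg₀ x hx]
  have hcomm : Commute B (cfc g B) := by
    have := cfc_commute_cfc (fun x : ℝ => x) g B
    rwa [cfc_id' ℝ B] at this
  have hproj : IsStarProjection (cfc g B) := ⟨hidem, cfc_predicate g B⟩
  have hsq : ∀ y, inner ℂ (B (B y)) y = ((‖B y‖ ^ 2 : ℝ) : ℂ) := fun y => by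
    rw [hB.inner_apply_left, inner_self_eq_norm_sq_to_K]
    simp
  refine ⟨cfc g B, hproj, hcomm, fun x => ?_, fun x => ?_⟩
  · have hn : ‖B * cfc g B‖ ≤ ρ₁ := by
      have e : B * cfc g B = cfc (fun x => x * g x) B := by
        rw [cfc_mul (fun x : ℝ => x) g B, cfc_id' ℝ B]
      rw [e]
      refine norm_cfc_le h0 fun x hx => ?_
      rcases h x hx with hx | hx
      · simpa [hg₁ x hx] using hx
      · simpa [hg₀ x hx] using h0
    have := (B * cfc g B).le_of_opNorm_le hn (cfc g B x)
    simpa [hproj.apply_apply] using this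
  · set y := x - cfc g B x with hy
    have hQy : cfc g B y = 0 := by simp [hy, hproj.apply_apply]
    have hnn : 0 ≤ cfc (fun x : ℝ => (1 - g x) * (x * x - ρ₂ ^ 2)) B := by
      refine cfc_nonneg fun x hx => ?_
      rcases h x hx with hx | hx
      · simp [hg₁ x hx]
      · have := pow_le_pow_left₀ (h0.trans h12.le) hx 2
        rw [sq_abs] at this
        simp only [hg₀ x hx]
        nlinarith
    have e : cfc (fun x : ℝ => (1 - g x) * (x * x - ρ₂ ^ 2)) B =
        (B * B - algebraMap ℝ _ (ρ₂ ^ 2)) * (1 - cfc g B) := by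
      rw [cfc_mul (fun x : ℝ => 1 - g x) (fun x : ℝ => x * x - ρ₂ ^ 2) B,
        cfc_sub (fun _ : ℝ => 1) g B, cfc_sub (fun x : ℝ => x * x) (fun _ => ρ₂ ^ 2) B,
        cfc_mul (fun x : ℝ => x) (fun x : ℝ => x) B, cfc_id' ℝ B, cfc_const_one ℝ B,
        cfc_const (ρ₂ ^ 2) B]
      have c₁ : Commute (1 - cfc g B) B := (Commute.one_left _).sub_left hcomm.symm
      exact ((c₁.mul_right c₁).sub_right (Algebra.commutes _ _).symm).eq
    rw [e, ContinuousLinearMap.nonneg_iff_isPositive] at hnn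
    have hre := hnn.re_inner_nonneg_left y
    have ev : ((B * B - algebraMap ℝ _ (ρ₂ ^ 2)) * (1 - cfc g B)) y =
        B (B y) - ((ρ₂ ^ 2 : ℝ) : ℂ) • y := by
      rw [Complex.coe_smul]
      simp [hQy, Algebra.algebraMap_eq_smul_one]
    rw [ev, inner_sub_left, hsq, inner_smul_left] at hre
    have hre' : ρ₂ ^ 2 * ‖y‖ ^ 2 ≤ ‖B y‖ ^ 2 := by
      have e' : inner ℂ y y = ((‖y‖ ^ 2 : ℝ) : ℂ) := by simp [inner_self_eq_norm_sq_to_K]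
      rw [e', Complex.conj_ofReal, ← Complex.ofReal_mul, ← Complex.ofReal_sub] at hre
      have : 0 ≤ ‖B y‖ ^ 2 - ρ₂ ^ 2 * ‖y‖ ^ 2 := by
        simpa only [RCLike.re_eq_complex_re, Complex.ofReal_re] using hre
      linarith
    refine (abs_le_of_sq_le_sq' ?_ (norm_nonneg _)).2
    rwa [mul_pow]

end Spectrum

section Perturbation

variable {H : Type*} [NormedAddCommGroup H] [InnerProductSpace ℂ H] [CompleteSpace H]

namespace SplitsAt

variable {A V B B' P Q Q' : H →L[ℂ] H} {ρ₁ ρ₂ : ℝ}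

theorem mono_left (h : SplitsAt B Q ρ₁ ρ₂) {ρ : ℝ} (hρ : ρ₁ ≤ ρ) : SplitsAt B Q ρ ρ₂ :=
  ⟨h.isStarProjection, h.commute, fun x => (h.norm_le x).trans (by gcongr), h.le_norm⟩

theorem apply_comm (h : SplitsAt B Q ρ₁ ρ₂) (x : H) : B (Q x) = Q (B x) :=
  congrArg (fun T : H →L[ℂ] H => T x) h.commute.eq

theorem one_sub_mul_le (h : SplitsAt B Q ρ₁ ρ₂) (h' : SplitsAt B' Q' ρ₁ ρ₂) (h0 : 0 ≤ ρ₁)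
    (h12 : ρ₁ < ρ₂) : (ρ₂ - ρ₁) * ‖(1 - Q') * Q‖ ≤ ‖B' - B‖ := by
  have h2 : 0 < ρ₂ := h0.trans_lt h12
  set s := ‖(1 - Q') * Q‖ with hs
  have key : s ≤ (‖B' - B‖ + s * ρ₁) / ρ₂ := by
    refine ContinuousLinearMap.opNorm_le_bound _ (by positivity) fun x => ?_
    have hQ := h.isStarProjection
    have hQ' := h'.isStarProjection
    set z := Q x with hz
    have hQz : Q z = z := hQ.apply_apply x
    have e : B' (z - Q' z) =
        ((B' - B) z - Q' ((B' - B) z)) + ((1 - Q') * Q) (B z) := by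
      have : Q (B z) = B z := by rw [← h.apply_comm, hQz]
      simp only [map_sub, h'.apply_comm, sub_apply, mul_apply_eq_comp,
        one_apply_eq_self, this]
      abel
    have n₁ : ‖(B' - B) z - Q' ((B' - B) z)‖ ≤ ‖B' - B‖ * ‖z‖ :=
      (hQ'.norm_sub_apply_le _).trans ((B' - B).le_opNorm z)
    have n₂ : ‖((1 - Q') * Q) (B z)‖ ≤ s * (ρ₁ * ‖z‖) :=
      (((1 - Q') * Q).le_opNorm _).trans
        (mul_le_mul_of_nonneg_left (h.norm_le x) (norm_nonneg _))
    have n₃ := h'.le_norm z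
    rw [e] at n₃
    have n₄ : ‖z‖ ≤ ‖x‖ := hQ.norm_apply_le x
    have n₅ : ρ₂ * ‖z - Q' z‖ ≤ (‖B' - B‖ + s * ρ₁) * ‖x‖ := by
      calc ρ₂ * ‖z - Q' z‖ ≤ ‖B' - B‖ * ‖z‖ + s * (ρ₁ * ‖z‖) :=
            n₃.trans ((norm_add_le _ _).trans (add_le_add n₁ n₂))
        _ = (‖B' - B‖ + s * ρ₁) * ‖z‖ := by ring
        _ ≤ _ := by gcongr
    have e' : ((1 - Q') * Q) x = z - Q' z := by simp [hz]
    rw [e', div_mul_eq_mul_div, le_div_iff₀ h2]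
    linarith
  rw [le_div_iff₀ h2] at key
  linarith

theorem norm_sub_le (h : SplitsAt B Q ρ₁ ρ₂) (h' : SplitsAt B' Q' ρ₁ ρ₂) (h0 : 0 ≤ ρ₁)
    (h12 : ρ₁ < ρ₂) : ‖Q - Q'‖ ≤ ‖B - B'‖ / (ρ₂ - ρ₁) := by
  have hpos : 0 < ρ₂ - ρ₁ := sub_pos.2 h12
  refine h.isStarProjection.norm_sub_le h'.isStarProjection (by positivity) ?_ ?_
  · rw [le_div_iff₀ hpos, mul_comm]
    exact h'.one_sub_mul_le h h0 h12
  · rw [le_div_iff₀ hpos, mul_comm, norm_sub_rev]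
    exact h.one_sub_mul_le h' h0 h12

/-- A `tan Θ` bound for an off-diagonal perturbation. -/
theorem one_sub_mul_le_of_offDiagonal {r : ℝ} (hA : SplitsAt A P r ρ₂)
    (hB : SplitsAt (A + V) Q ρ₁ ρ₂) (h0 : 0 ≤ ρ₁) (h12 : ρ₁ < ρ₂)
    (hoff : (1 - P) * V * (1 - P) = 0) {v κ : ℝ} (hv : ‖V‖ ≤ v) (hκ : 0 ≤ κ)
    (hκv : v ^ 2 * (1 - κ ^ 2) = ((ρ₂ - ρ₁) * κ) ^ 2) :
    ‖(1 - P) * Q‖ ≤ κ := by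
  have h2 : 0 < ρ₂ := h0.trans_lt h12
  have hv0 : 0 ≤ v := (norm_nonneg V).trans hv
  have hP := hA.isStarProjection
  have hQ := hB.isStarProjection
  set s := ‖(1 - P) * Q‖ with hs
  by_contra! hlt
  have key : s ≤ (s * ρ₁ + (ρ₂ - ρ₁) * κ) / ρ₂ := by
    have hnn : 0 ≤ s * ρ₁ + (ρ₂ - ρ₁) * κ := by
      have : 0 ≤ (ρ₂ - ρ₁) * κ := mul_nonneg (by linarith) hκ
      positivity
    refine ContinuousLinearMap.opNorm_le_bound _ (by positivity) fun x => ?_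
    set y := Q x with hy
    have hQy : Q y = y := hQ.apply_apply x
    have hyx : ‖y‖ ≤ ‖x‖ := hQ.norm_apply_le x
    have e' : ((1 - P) * Q) x = y - P y := by simp [hy]
    rw [e', div_mul_eq_mul_div, le_div_iff₀ h2]
    suffices ρ₂ * ‖y - P y‖ ≤ (s * ρ₁ + (ρ₂ - ρ₁) * κ) * ‖y‖ by
      have := this.trans (mul_le_mul_of_nonneg_left hyx hnn)
      linarith
    rcases le_total ‖y - P y‖ (κ * ‖y‖) with hle | hge
    · have := mul_le_mul_of_nonneg_left hle h2.le
      have h₃ : ρ₁ * κ ≤ ρ₁ * s := mul_le_mul_of_nonneg_left hlt.le h0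
      nlinarith [mul_le_mul_of_nonneg_right h₃ (norm_nonneg y)]
    · have hoffy : V (y - P y) - P (V (y - P y)) = 0 := by
        have := congrArg (fun T : H →L[ℂ] H => T y) hoff
        simpa using this
      have e : A (y - P y) =
          ((1 - P) * Q) ((A + V) y) - (V (P y) - P (V (P y))) := by
        have h₁ : Q ((A + V) y) = (A + V) y := by rw [← hB.apply_comm, hQy]
        have h₂ : V y - P (V y) = V (P y) - P (V (P y)) := by
          rw [← sub_eq_zero, ← hoffy]
          simp only [map_sub]
          abel
        rw [← h₂, mul_apply_eq_comp, h₁]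
        simp only [map_sub, map_add, hA.apply_comm, add_apply, sub_apply, one_apply_eq_self]
        abel
      have n₁ : ‖((1 - P) * Q) ((A + V) y)‖ ≤ s * (ρ₁ * ‖y‖) :=
        (((1 - P) * Q).le_opNorm _).trans
          (mul_le_mul_of_nonneg_left (hB.norm_le x) (norm_nonneg _))
      have n₂ : ‖V (P y) - P (V (P y))‖ ≤ v * ‖P y‖ :=
        (hP.norm_sub_apply_le _).trans (V.le_of_opNorm_le hv _)
      have n₃ := hA.le_norm y
      rw [e] at n₃
      have n₄ := n₃.trans ((_root_.norm_sub_le _ _).trans (add_le_add n₁ n₂))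
      have n₅ : v * ‖P y‖ ≤ (ρ₂ - ρ₁) * κ * ‖y‖ := by
        refine (abs_le_of_sq_le_sq' ?_
          (mul_nonneg (mul_nonneg (by linarith) hκ) (norm_nonneg _))).2
        have h₁ := hP.norm_sq_add_norm_sq y
        have h₂ := pow_le_pow_left₀ (by positivity) hge 2
        rw [mul_pow, mul_pow, ← hκv]
        have : ‖P y‖ ^ 2 ≤ (1 - κ ^ 2) * ‖y‖ ^ 2 := by nlinarith
        nlinarith [mul_le_mul_of_nonneg_left this (sq_nonneg v)]
      linarith
  rw [le_div_iff₀ h2] at key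
  have : (ρ₂ - ρ₁) * s ≤ (ρ₂ - ρ₁) * κ := by linarith
  exact absurd (le_of_mul_le_mul_left this (by linarith)) (not_le.2 hlt)

/-- If the spectral gap persists along the segment from `A` to `A + V` for an off-diagonal `V`,
then the corresponding spectral projections satisfy the `tan Θ` bound. -/
theorem norm_sub_le_of_offDiagonal {r : ℝ} (hA : SplitsAt A P r ρ₂) (hr : r ≤ ρ₁)
    (hB : SplitsAt (A + V) Q ρ₁ ρ₂) (h0 : 0 ≤ ρ₁) (h12 : ρ₁ < ρ₂)
    (hex : ∀ t ∈ Set.Icc (0 : ℝ) 1, ∃ R, SplitsAt (A + (t : ℂ) • V) R ρ₁ ρ₂)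
    (hoff : (1 - P) * V * (1 - P) = 0) {v κ : ℝ} (hv : ‖V‖ ≤ v) (hκ : 0 ≤ κ) (hκ1 : κ < 1)
    (hκv : v ^ 2 * (1 - κ ^ 2) = ((ρ₂ - ρ₁) * κ) ^ 2) :
    ‖P - Q‖ ≤ κ := by
  choose! R hR using hex
  have hpos : 0 < ρ₂ - ρ₁ := sub_pos.2 h12
  have hlip : ∀ t ∈ Set.Icc (0 : ℝ) 1, ∀ u ∈ Set.Icc (0 : ℝ) 1,
      ‖R t - R u‖ ≤ ‖V‖ / (ρ₂ - ρ₁) * |t - u| := fun t ht u hu => by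
    refine ((hR t ht).norm_sub_le (hR u hu) h0 h12).trans_eq ?_
    have : A + (t : ℂ) • V - (A + (u : ℂ) • V) = ((t - u : ℝ) : ℂ) • V := by
      push_cast
      rw [sub_smul]
      abel
    rw [this, norm_smul, Complex.norm_real, Real.norm_eq_abs]
    ring
  have hzero : (0 : ℝ) ∈ Set.Icc (0 : ℝ) 1 := by simp
  have hone : (1 : ℝ) ∈ Set.Icc (0 : ℝ) 1 := by simp
  have hR0 : P = R 0 := by
    have := (hA.mono_left hr).norm_sub_le (hR 0 hzero) h0 h12
    simp only [Complex.ofReal_zero, zero_smul, add_zero, sub_self, norm_zero, zero_div] at this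
    exact sub_eq_zero.1 (norm_le_zero_iff.1 this)
  have hR1 : Q = R 1 := by
    have := hB.norm_sub_le (hR 1 hone) h0 h12
    simp only [Complex.ofReal_one, one_smul, sub_self, norm_zero, zero_div] at this
    exact sub_eq_zero.1 (norm_le_zero_iff.1 this)
  have hgap : ∀ t ∈ Set.Icc (0 : ℝ) 1, ‖P - R t‖ < 1 → ‖P - R t‖ ≤ κ := fun t ht hlt => by
    refine (hA.isStarProjection.norm_sub_le_of_norm_sub_lt_one
      (hR t ht).isStarProjection hlt).trans ?_
    refine hA.one_sub_mul_le_of_offDiagonal (hR t ht) h0 h12 ?_ (v := v) ?_ hκ hκv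
    · rw [mul_smul_comm, smul_mul_assoc, hoff, smul_zero]
    · rw [norm_smul, Complex.norm_real, Real.norm_eq_abs, abs_of_nonneg ht.1]
      exact (mul_le_of_le_one_left (norm_nonneg _) ht.2).trans hv
  have hcont : ContinuousOn (fun t => ‖P - R t‖) (Set.Icc (0 : ℝ) 1) := by
    refine ContinuousOn.norm (continuousOn_const.sub ?_)
    refine LipschitzOnWith.continuousOn (K := Real.toNNReal (‖V‖ / (ρ₂ - ρ₁))) ?_
    refine LipschitzOnWith.of_dist_le_mul fun t ht u hu => ?_
    rw [Real.coe_toNNReal _ (by positivity), dist_eq_norm, Real.dist_eq]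
    exact hlip t ht u hu
  rw [hR1]
  by_contra! hgt
  set m := (κ + min ‖P - R 1‖ 1) / 2 with hm
  have hmin : κ < min ‖P - R 1‖ 1 := lt_min hgt hκ1
  have hm₁ : m ∈ Set.Icc ‖P - R 0‖ ‖P - R 1‖ := by
    rw [← hR0, sub_self, norm_zero]
    exact ⟨by linarith, by linarith [min_le_left ‖P - R 1‖ 1]⟩
  obtain ⟨t, ht, htm⟩ := intermediate_value_Icc zero_le_one hcont hm₁
  have := hgap t ht (by
    simp only at htm
    rw [htm]
    linarith [min_le_right ‖P - R 1‖ 1])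
  simp only at htm
  linarith

end SplitsAt

end Perturbation

namespace IsSpectralMeasure

variable {H : Type*} [NormedAddCommGroup H] [InnerProductSpace ℂ H] [CompleteSpace H]
  {T : H →L[ℂ] H} {E : Set ℝ → H →L[ℂ] H}

theorem isStarProjection (hE : IsSpectralMeasure T E) {Δ : Set ℝ} (hΔ : MeasurableSet Δ) :
    IsStarProjection (E Δ) :=
  ⟨by rw [IsIdempotentElem, hE.map_inter Δ Δ hΔ hΔ, Set.inter_self], hE.isSelfAdjoint Δ hΔ⟩

theorem apply_apply_inter (hE : IsSpectralMeasure T E) {Δ Δ' : Set ℝ} (hΔ : MeasurableSet Δ)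
    (hΔ' : MeasurableSet Δ') (x : H) : E Δ (E Δ' x) = E (Δ ∩ Δ') x :=
  congrArg (fun S : H →L[ℂ] H => S x) (hE.map_inter Δ Δ' hΔ hΔ')

theorem apply_comm (hE : IsSpectralMeasure T E) {Δ : Set ℝ} (hΔ : MeasurableSet Δ) (x : H) :
    T (E Δ x) = E Δ (T x) :=
  congrArg (fun S : H →L[ℂ] H => S x) (hE.commutes Δ hΔ).eq

theorem map_empty (hE : IsSpectralMeasure T E) : E ∅ = 0 := by
  ext x
  have h := hE.countably_additive (fun _ => ∅) (fun _ => MeasurableSet.empty)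
    (fun _ _ _ => by simp [Function.onFun]) x
  simpa using tendsto_nhds_unique tendsto_const_nhds h.summable.tendsto_atTop_zero

theorem map_iUnion_eq_zero (hE : IsSpectralMeasure T E) {Δ : ℕ → Set ℝ}
    (hΔ : ∀ n, MeasurableSet (Δ n)) (h : ∀ n, E (Δ n) = 0) : E (⋃ n, Δ n) = 0 := by
  ext x
  have hm : ∀ n, MeasurableSet (disjointed Δ n) := fun n => MeasurableSet.disjointed hΔ n
  have hs := hE.countably_additive (disjointed Δ) hm (disjoint_disjointed Δ) x
  rw [iUnion_disjointed] at hs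
  have hz : ∀ n, E (disjointed Δ n) x = 0 := fun n => by
    rw [← Set.inter_eq_self_of_subset_left (disjointed_subset Δ n),
      ← hE.apply_apply_inter (hm n) (hΔ n), h n]
    simp
  simp only [hz] at hs
  simpa using hs.unique hasSum_zero

theorem map_union (hE : IsSpectralMeasure T E) {Δ₁ Δ₂ : Set ℝ} (h₁ : MeasurableSet Δ₁)
    (h₂ : MeasurableSet Δ₂) (hd : Disjoint Δ₁ Δ₂) : E (Δ₁ ∪ Δ₂) = E Δ₁ + E Δ₂ := by
  ext x
  have hU : ⋃ n : ℕ, (if n = 0 then Δ₁ else if n = 1 then Δ₂ else ∅) = Δ₁ ∪ Δ₂ := by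
    ext t
    simp only [Set.mem_iUnion, Set.mem_union]
    constructor
    · rintro ⟨n, hn⟩
      split_ifs at hn <;> simp_all
    · rintro (h | h)
      · exact ⟨0, by simpa⟩
      · exact ⟨1, by simpa⟩
  have h := hE.countably_additive
    (fun n => if n = 0 then Δ₁ else if n = 1 then Δ₂ else ∅)
    (fun n => by split_ifs <;> simp [*])
    (fun i j hij => by
      simp only [Function.onFun]
      split_ifs <;> simp_all [hd.symm]) x
  rw [hU] at h
  have h' := hasSum_sum_of_ne_finset_zero (L := .unconditional ℕ) (s := Finset.range 2)
    (f := fun n : ℕ => E (if n = 0 then Δ₁ else if n = 1 then Δ₂ else ∅) x) (fun n hn => by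
      have h2 : 1 < n := by simpa using hn
      have : n ≠ 0 ∧ n ≠ 1 := by omega
      simp [this, hE.map_empty])
  rw [h.unique h']
  simp [Finset.sum_range_succ]

theorem map_compl (hE : IsSpectralMeasure T E) {Δ : Set ℝ} (hΔ : MeasurableSet Δ) :
    E Δᶜ = 1 - E Δ := by
  rw [eq_sub_iff_add_eq', ← hE.map_union hΔ hΔ.compl disjoint_compl_right, Set.union_compl_self,
    hE.map_univ]

theorem map_eq_zero_of_subset (hE : IsSpectralMeasure T E) {Δ Δ' : Set ℝ}
    (hΔ : MeasurableSet Δ) (hΔ' : MeasurableSet Δ') (hs : Δ ⊆ Δ') (h : E Δ' = 0) : E Δ = 0 := by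
  rw [← Set.inter_eq_self_of_subset_left hs, ← hE.map_inter Δ Δ' hΔ hΔ', h, mul_zero]

/-- Two Borel sets whose differences carry no spectral mass have the same projection. -/
theorem map_congr (hE : IsSpectralMeasure T E) {Δ Δ' : Set ℝ} (hΔ : MeasurableSet Δ)
    (hΔ' : MeasurableSet Δ') (hs : Δ ⊆ Δ') (h : E (Δ' \ Δ) = 0) : E Δ = E Δ' := by
  rw [← Set.union_sdiff_cancel hs, hE.map_union hΔ (hΔ'.diff hΔ) disjoint_sdiff_self_right, h,
    add_zero]

theorem inner_apply_apply_of_disjoint (hE : IsSpectralMeasure T E) {Δ Δ' : Set ℝ}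
    (hΔ : MeasurableSet Δ) (hΔ' : MeasurableSet Δ') (h : Disjoint Δ Δ') (x y : H) :
    inner ℂ (E Δ x) (E Δ' y) = 0 := by
  rw [(hE.isSelfAdjoint Δ hΔ).inner_apply_left, hE.apply_apply_inter hΔ hΔ', h.inter_eq,
    hE.map_empty]
  simp

theorem apply_of_subset (hE : IsSpectralMeasure T E) {Δ Δ' : Set ℝ} (hΔ : MeasurableSet Δ)
    (hΔ' : MeasurableSet Δ') (h : Δ ⊆ Δ') (x : H) : E Δ' (E Δ x) = E Δ x := by
  rw [hE.apply_apply_inter hΔ' hΔ, Set.inter_eq_self_of_subset_right h]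

theorem inner_apply_self_of_offDiagonal (hE : IsSpectralMeasure T E) {V : H →L[ℂ] H}
    {Δ : Set ℝ} (hΔ : MeasurableSet Δ) (hV : E Δ * V * E Δ = 0) {x : H} (hx : E Δ x = x) :
    inner ℂ (V x) x = 0 := by
  have h : E Δ (V x) = 0 := by
    have := congrArg (fun S : H →L[ℂ] H => S x) hV
    simpa [hx] using this
  nth_rewrite 2 [← hx]
  rw [← (hE.isSelfAdjoint Δ hΔ).inner_apply_left, h, inner_zero_left]

/-- On the range of `E Δ` with `Δ` in a ball around `μ`, the operator is close to `μ`. -/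
theorem norm_sub_smul_le (hE : IsSpectralMeasure T E) (hT : IsSelfAdjoint T) {Δ : Set ℝ}
    (hΔ : MeasurableSet Δ) {μ ε : ℝ} (hε : 0 ≤ ε) (hs : Δ ⊆ Metric.closedBall μ ε) {x : H}
    (hx : E Δ x = x) : ‖T x - (μ : ℂ) • x‖ ≤ ε * ‖x‖ := by
  rcases Δ.eq_empty_or_nonempty with rfl | hne
  · have : x = 0 := by rw [← hx, hE.map_empty]; simp
    simp [this]
  have hP := hE.isStarProjection hΔ
  have hTμ : IsSelfAdjoint (T - algebraMap ℝ (H →L[ℂ] H) μ) :=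
    hT.sub (IsSelfAdjoint.algebraMap _ (IsSelfAdjoint.all μ))
  have happ : ∀ y, (T - algebraMap ℝ (H →L[ℂ] H) μ) y = T y - (μ : ℂ) • y := fun y => by
    simp [Algebra.algebraMap_eq_smul_one]
  have hcomm : Commute (T - algebraMap ℝ (H →L[ℂ] H) μ) (E Δ) :=
    (hE.commutes Δ hΔ).sub_left (Algebra.commutes _ _)
  set S := (T - algebraMap ℝ (H →L[ℂ] H) μ) * E Δ with hS
  have hSsa : IsSelfAdjoint S := (hTμ.commute_iff hP.isSelfAdjoint).1 hcomm
  have hnorm : ‖S‖ ≤ ε := by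
    refine hSsa.norm_le_of_spectrum_subset hε fun l hl => ?_
    by_contra! hlt
    refine hSsa.notMem_spectrum_of_le_norm (μ := l) (sub_pos.2 hlt) (fun y => ?_) hl
    have hz : E Δ (S y - (l : ℂ) • y) = T (E Δ y) - ((μ + l : ℝ) : ℂ) • E Δ y := by
      rw [hS, mul_apply_eq_comp, happ]
      simp only [map_sub, map_smul, ← hE.apply_comm hΔ, hP.apply_apply]
      push_cast
      rw [add_smul]
      abel
    have hw : S y - (l : ℂ) • y - E Δ (S y - (l : ℂ) • y) = -((l : ℂ) • (y - E Δ y)) := by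
      rw [hz, hS, mul_apply_eq_comp, happ]
      push_cast
      rw [add_smul, smul_sub]
      abel
    have hinf : |l| - ε ≤ Metric.infDist (μ + l) Δ := by
      rw [Metric.le_infDist hne]
      intro t ht
      have h₁ := Metric.mem_closedBall.1 (hs ht)
      rw [Real.dist_eq] at h₁ ⊢
      have h₂ : |l| ≤ |μ + l - t| + |t - μ| := by
        have := abs_add_le (μ + l - t) (t - μ)
        rwa [show μ + l - t + (t - μ) = l by ring] at this
      linarith
    have hloc := hE.spectrum_loc Δ hΔ (E Δ y) (hP.apply_apply y) (μ + l)
    have n₁ : (|l| - ε) * ‖E Δ y‖ ≤ ‖T (E Δ y) - ((μ + l : ℝ) : ℂ) • E Δ y‖ :=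
      (mul_le_mul_of_nonneg_right hinf (norm_nonneg _)).trans hloc
    have n₂ : (|l| - ε) * ‖y - E Δ y‖ ≤ ‖-((l : ℂ) • (y - E Δ y))‖ := by
      rw [norm_neg, norm_smul, Complex.norm_real, Real.norm_eq_abs]
      exact mul_le_mul_of_nonneg_right (by linarith) (norm_nonneg _)
    have h₁ := hP.norm_sq_add_norm_sq (S y - (l : ℂ) • y)
    rw [hw, hz] at h₁
    have h₂ := hP.norm_sq_add_norm_sq y
    have hpos : 0 ≤ |l| - ε := by linarith
    have m₁ := pow_le_pow_left₀ (by positivity) n₁ 2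
    have m₂ := pow_le_pow_left₀ (by positivity) n₂ 2
    refine (abs_le_of_sq_le_sq' ?_ (norm_nonneg _)).2
    rw [← h₁, mul_pow, ← h₂]
    linarith [mul_pow (|l| - ε) ‖E Δ y‖ 2, mul_pow (|l| - ε) ‖y - E Δ y‖ 2]
  have := S.le_of_opNorm_le hnorm x
  rwa [hS, mul_apply_eq_comp, hx, happ] at this

/-- The spectral measure is carried by the spectrum. -/
theorem map_eq_zero_of_disjoint_spectrum (hE : IsSpectralMeasure T E) (hT : IsSelfAdjoint T)
    {Δ : Set ℝ} (hΔ : MeasurableSet Δ) (hd : Disjoint Δ (spectrum ℝ T)) : E Δ = 0 := by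
  have hball : ∀ μ ∈ Δ, ∃ ε : ℝ, 0 < ε ∧ E (Metric.ball μ ε) = 0 := fun μ hμ => by
    obtain ⟨c, hc, h⟩ := exists_pos_le_norm_of_notMem_spectrum
      (Set.disjoint_left.1 hd hμ)
    refine ⟨c / 2, by positivity, ?_⟩
    ext x
    have hfix := (hE.isStarProjection (measurableSet_ball (x := μ) (ε := c / 2))).apply_apply x
    have h₁ := hE.norm_sub_smul_le hT measurableSet_ball (by positivity)
      Metric.ball_subset_closedBall hfix
    have h₂ := h (E (Metric.ball μ (c / 2)) x)
    have h₃ : c / 2 * ‖E (Metric.ball μ (c / 2)) x‖ ≤ 0 := by linarith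
    have h₄ : ‖E (Metric.ball μ (c / 2)) x‖ ≤ 0 := by
      by_contra! h₅
      have : 0 < c / 2 * ‖E (Metric.ball μ (c / 2)) x‖ := by positivity
      linarith
    simpa using h₄
  choose! ε hε hz using hball
  obtain ⟨t, htΔ, htc, hcov⟩ := TopologicalSpace.countable_cover_nhdsWithin
    (s := Δ) (f := fun μ => Metric.ball μ (ε μ))
    (fun μ hμ => mem_nhdsWithin_of_mem_nhds (Metric.ball_mem_nhds μ (hε μ hμ)))
  rcases t.eq_empty_or_nonempty with rfl | hne
  · have : Δ = ∅ := by simpa using hcov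
    rw [this, hE.map_empty]
  obtain ⟨f, hf⟩ := htc.exists_eq_range hne
  have hft : ∀ n, f n ∈ Δ := fun n => htΔ (hf ▸ Set.mem_range_self n)
  refine hE.map_eq_zero_of_subset hΔ (MeasurableSet.iUnion fun n => measurableSet_ball)
    ?_ (hE.map_iUnion_eq_zero (Δ := fun n => Metric.ball (f n) (ε (f n)))
      (fun n => measurableSet_ball) fun n => hz _ (hft n))
  rw [hf, Set.biUnion_range] at hcov
  exact hcov

theorem map_add_map_of_spectrum_eq (hE : IsSpectralMeasure T E) (hT : IsSelfAdjoint T)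
    {Δ₁ Δ₂ : Set ℝ} (h₁ : MeasurableSet Δ₁) (h₂ : MeasurableSet Δ₂) (hd : Disjoint Δ₁ Δ₂)
    (hspec : spectrum ℝ T = Δ₁ ∪ Δ₂) : E Δ₁ + E Δ₂ = 1 := by
  rw [← hE.map_union h₁ h₂ hd]
  have := hE.map_eq_zero_of_disjoint_spectrum hT (h₁.union h₂).compl
    (by rw [hspec]; exact disjoint_compl_left)
  rw [hE.map_compl (h₁.union h₂), sub_eq_zero] at this
  exact this.symm

/-- Quadratic form bounds on a spectral subspace. -/
theorem re_inner_mem_Icc (hE : IsSpectralMeasure T E) (hT : IsSelfAdjoint T) {Δ : Set ℝ}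
    (hΔ : MeasurableSet Δ) {α β : ℝ} (hαβ : α ≤ β) (hs : Δ ⊆ Set.Icc α β) {x : H}
    (hx : E Δ x = x) :
    (inner ℂ (T x) x).re ∈ Set.Icc (α * ‖x‖ ^ 2) (β * ‖x‖ ^ 2) := by
  have h := hE.norm_sub_smul_le hT hΔ (μ := (α + β) / 2) (ε := (β - α) / 2) (by linarith)
    (by rwa [← Real.Icc_eq_closedBall]) hx
  have h₁ := (Complex.abs_re_le_norm _).trans
    ((norm_inner_le_norm (𝕜 := ℂ) (T x - (((α + β) / 2 : ℝ) : ℂ) • x) x).trans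
      (mul_le_mul_of_nonneg_right h (norm_nonneg _)))
  have e : (inner ℂ (T x - (((α + β) / 2 : ℝ) : ℂ) • x) x).re =
      (inner ℂ (T x) x).re - (α + β) / 2 * ‖x‖ ^ 2 := by
    have e' : inner ℂ x x = ((‖x‖ ^ 2 : ℝ) : ℂ) := by simp [inner_self_eq_norm_sq_to_K]
    rw [inner_sub_left, inner_smul_left, e', Complex.conj_ofReal, ← Complex.ofReal_mul,
      Complex.sub_re, Complex.ofReal_re]
  rw [e, abs_le] at h₁
  constructor <;> nlinarith [h₁.1, h₁.2]

end IsSpectralMeasure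

section OffDiagonal

variable {H : Type*} [NormedAddCommGroup H] [InnerProductSpace ℂ H] [CompleteSpace H]
  {A V : H →L[ℂ] H}

theorem re_inner_smul_self {H : Type*} [NormedAddCommGroup H] [InnerProductSpace ℂ H]
    (l : ℝ) (x : H) : (inner ℂ ((l : ℂ) • x) x).re = l * ‖x‖ ^ 2 := by
  have e : inner ℂ x x = ((‖x‖ ^ 2 : ℝ) : ℂ) := by simp [inner_self_eq_norm_sq_to_K]
  rw [inner_smul_left, e, Complex.conj_ofReal, ← Complex.ofReal_mul, Complex.ofReal_re]

theorem IsSelfAdjoint.re_inner_apply_comm {T : H →L[ℂ] H} (hT : IsSelfAdjoint T) (x y : H) :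
    (inner ℂ (T x) y).re = (inner ℂ (T y) x).re := by
  rw [hT.inner_apply_left, ← inner_conj_symm, Complex.conj_re]

/-- Lower bound for `A + V - l` at a vector `p + u + n` decomposed into a middle, an upper and
a lower component, for `l` in the gap between the lower and the middle part. -/
theorem le_norm_add_sub_smul (hA : IsSelfAdjoint A) (hV : IsSelfAdjoint V) {p n u : H}
    {a d δ v l m : ℝ} (hpn : inner ℂ p n = 0) (hun : inner ℂ u n = 0) (hpu : inner ℂ p u = 0)
    (hApu : inner ℂ (A p) u = 0)
    (hVp : inner ℂ (V p) p = 0) (hVu : inner ℂ (V u) u = 0) (hVn : inner ℂ (V n) n = 0)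
    (hp : a * ‖p‖ ^ 2 ≤ (inner ℂ (A p) p).re) (hu : (a + d) * ‖u‖ ^ 2 ≤ (inner ℂ (A u) u).re)
    (hn : (inner ℂ (A n) n).re ≤ (a - d) * ‖n‖ ^ 2) (hv : ‖V‖ ≤ v) (hδ0 : 0 ≤ δ) (hd : 0 < d)
    (hδ : δ * (δ + d) = v ^ 2) (hm₁ : m ≤ a - δ - l) (hm₂ : m ≤ l - (a - d)) :
    m * ‖p + u + n‖ ≤ ‖(A + V) (p + u + n) - (l : ℂ) • (p + u + n)‖ := by
  set w := p + u with hw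
  have hwn : inner ℂ w n = 0 := by rw [hw, inner_add_left, hpn, hun, add_zero]
  have hwsq : ‖w‖ ^ 2 = ‖p‖ ^ 2 + ‖u‖ ^ 2 := by
    have := norm_add_sq_eq_norm_sq_add_norm_sq_of_inner_eq_zero (𝕜 := ℂ) p u hpu
    rw [hw]
    linarith
  have hxsq : ‖w + n‖ ^ 2 = ‖w‖ ^ 2 + ‖n‖ ^ 2 := by
    have := norm_add_sq_eq_norm_sq_add_norm_sq_of_inner_eq_zero (𝕜 := ℂ) w n hwn
    linarith
  have hysq : ‖w - n‖ ^ 2 = ‖w‖ ^ 2 + ‖n‖ ^ 2 := by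
    have := norm_add_sq_eq_norm_sq_add_norm_sq_of_inner_eq_zero (𝕜 := ℂ) w (-n)
      (by rw [inner_neg_right, hwn, neg_zero])
    rw [norm_neg, ← sub_eq_add_neg] at this
    linarith
  have hyx : ‖w - n‖ = ‖w + n‖ := by
    rw [← sq_eq_sq₀ (norm_nonneg _) (norm_nonneg _), hxsq, hysq]
  have hAV : IsSelfAdjoint (A + V) := hA.add hV
  have hre : (inner ℂ ((A + V) (w + n) - (l : ℂ) • (w + n)) (w - n)).re =
      (inner ℂ ((A + V) w) w).re - (inner ℂ ((A + V) n) n).re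
        - l * (‖w‖ ^ 2 - ‖n‖ ^ 2) := by
    have hnw : inner ℂ n w = 0 := inner_eq_zero_symm.1 hwn
    have h₁ := hAV.re_inner_apply_comm w n
    have h₂ := re_inner_smul_self l w
    have h₃ := re_inner_smul_self l n
    have h₄ : inner ℂ ((l : ℂ) • w) n = 0 := by rw [inner_smul_left, hwn, mul_zero]
    have h₅ : inner ℂ ((l : ℂ) • n) w = 0 := by rw [inner_smul_left, hnw, mul_zero]
    rw [map_add, smul_add]
    simp only [inner_sub_left, inner_sub_right, inner_add_left, Complex.sub_re, Complex.add_re,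
      h₄, h₅, h₂, h₃, Complex.zero_re] at h₁ ⊢
    linarith
  have hformn : (inner ℂ ((A + V) n) n).re ≤ (a - d) * ‖n‖ ^ 2 := by
    rw [add_apply, inner_add_left, hVn, add_zero]
    exact hn
  have hformw : (a - δ) * ‖w‖ ^ 2 ≤ (inner ℂ ((A + V) w) w).re := by
    have h₁ : (inner ℂ (A u) p).re = 0 := by
      rw [hA.re_inner_apply_comm, hApu, Complex.zero_re]
    have h₂ : (inner ℂ (A p) u).re = 0 := by rw [hApu, Complex.zero_re]
    have h₃ := hV.re_inner_apply_comm u p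
    have h₄ : |(inner ℂ (V p) u).re| ≤ v * ‖p‖ * ‖u‖ :=
      (Complex.abs_re_le_norm _).trans ((norm_inner_le_norm _ _).trans
        (mul_le_mul_of_nonneg_right (V.le_of_opNorm_le hv p) (norm_nonneg _)))
    have h₅ := (abs_le.1 h₄).1
    have e : (inner ℂ ((A + V) w) w).re = (inner ℂ (A p) p).re + (inner ℂ (A u) u).re
        + 2 * (inner ℂ (V p) u).re := by
      rw [hw]
      simp only [add_apply, map_add, inner_add_left, inner_add_right, Complex.add_re, h₁, h₂, h₃,
        hVp, hVu, Complex.zero_re]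
      ring
    have hv0 : 0 ≤ v := (norm_nonneg _).trans hv
    have key : 2 * (v * ‖p‖ * ‖u‖) ≤ δ * ‖p‖ ^ 2 + (δ + d) * ‖u‖ ^ 2 := by
      have hs₁ := Real.sq_sqrt hδ0
      have hs₂ := Real.sq_sqrt (by linarith : 0 ≤ δ + d)
      have hs₃ : √δ * √(δ + d) = v := by
        rw [← Real.sqrt_mul hδ0, hδ, Real.sqrt_sq hv0]
      have := sq_nonneg (√δ * ‖p‖ - √(δ + d) * ‖u‖)
      calc 2 * (v * ‖p‖ * ‖u‖) = 2 * (√δ * √(δ + d) * ‖p‖ * ‖u‖) := by rw [hs₃]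
        _ ≤ √δ ^ 2 * ‖p‖ ^ 2 + √(δ + d) ^ 2 * ‖u‖ ^ 2 := by linarith
        _ = _ := by rw [hs₁, hs₂]
    rw [e, hwsq]
    linarith
  have hlow : m * ‖w + n‖ ^ 2 ≤
      (inner ℂ ((A + V) (w + n) - (l : ℂ) • (w + n)) (w - n)).re := by
    rw [hre, hxsq]
    nlinarith [mul_le_mul_of_nonneg_right hm₁ (sq_nonneg ‖w‖),
      mul_le_mul_of_nonneg_right hm₂ (sq_nonneg ‖n‖)]
  have hup := (Complex.re_le_norm _).trans (norm_inner_le_norm (𝕜 := ℂ)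
    ((A + V) (w + n) - (l : ℂ) • (w + n)) (w - n))
  rw [hyx] at hup
  rcases eq_or_lt_of_le (norm_nonneg (w + n)) with h0 | h0
  · rw [← h0, mul_zero]
    exact norm_nonneg _
  · refine le_of_mul_le_mul_right ?_ h0
    linarith

namespace IsSpectralMeasure

variable {E : Set ℝ → H →L[ℂ] H} {σ Sig : Set ℝ} {a b d δ v l : ℝ}

/-- An off-diagonal perturbation creates no spectrum at points `l` whose distances `s` to `σ`
and `t` to `Sig` satisfy `‖V‖ ^ 2 < s * t`. -/
theorem exists_le_norm_of_lt_mul (hE : IsSpectralMeasure A E) (hσm : MeasurableSet σ)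
    (hSigm : MeasurableSet Sig) (hdisj : Disjoint σ Sig) (hsum : E σ + E Sig = 1)
    (hoff₁ : E σ * V * E σ = 0) (hoff₂ : E Sig * V * E Sig = 0) {s t : ℝ} (hs0 : 0 < s)
    (ht0 : 0 < t) (hs : s ≤ Metric.infDist l σ) (ht : t ≤ Metric.infDist l Sig)
    (hv : ‖V‖ ≤ v) (hD : v ^ 2 < s * t) :
    ∃ m : ℝ, 0 < m ∧ ∀ x, m * ‖x‖ ≤ ‖(A + V) x - (l : ℂ) • x‖ := by
  have hv0 : 0 ≤ v := (norm_nonneg _).trans hv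
  have hP := hE.isStarProjection hσm
  have hS := hE.isStarProjection hSigm
  replace hD : 0 < s * t - v ^ 2 := sub_pos.2 hD
  refine ⟨(s * t - v ^ 2) / (s + t + 2 * v), by positivity, fun x => ?_⟩
  set p := E σ x with hp
  set q := E Sig x with hq
  have hx : p + q = x := by rw [hp, hq, ← add_apply, hsum, one_apply_eq_self]
  set z := (A + V) x - (l : ℂ) • x with hz
  have hVp : E σ (V p) = 0 := by
    have := congrArg (fun S : H →L[ℂ] H => S x) hoff₁
    simpa using this
  have hVq : E Sig (V q) = 0 := by
    have := congrArg (fun S : H →L[ℂ] H => S x) hoff₂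
    simpa using this
  have hσSig : ∀ y, E σ (E Sig y) = 0 := fun y => by
    rw [hE.apply_apply_inter hσm hSigm, hdisj.inter_eq, hE.map_empty]
    simp
  have hSigσ : ∀ y, E Sig (E σ y) = 0 := fun y => by
    rw [hE.apply_apply_inter hSigm hσm, hdisj.symm.inter_eq, hE.map_empty]
    simp
  have e₁ : A p - (l : ℂ) • p = E σ z - E σ (V q) := by
    rw [hz, ← hx]
    simp only [add_apply, map_add, map_sub, map_smul, ← hE.apply_comm hσm, hVp]
    rw [hp, hq, hP.apply_apply, hσSig]
    simp
    abel
  have e₂ : A q - (l : ℂ) • q = E Sig z - E Sig (V p) := by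
    rw [hz, ← hx]
    simp only [add_apply, map_add, map_sub, map_smul, ← hE.apply_comm hSigm, hVq]
    rw [hp, hq, hS.apply_apply, hSigσ]
    simp
    abel
  have n₁ : s * ‖p‖ ≤ ‖z‖ + v * ‖q‖ := by
    have := (mul_le_mul_of_nonneg_right hs (norm_nonneg p)).trans
      (hE.spectrum_loc σ hσm p (hP.apply_apply x) l)
    rw [e₁] at this
    refine this.trans ((norm_sub_le _ _).trans (add_le_add (hP.norm_apply_le z) ?_))
    exact (hP.norm_apply_le _).trans (V.le_of_opNorm_le hv q)
  have n₂ : t * ‖q‖ ≤ ‖z‖ + v * ‖p‖ := by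
    have := (mul_le_mul_of_nonneg_right ht (norm_nonneg q)).trans
      (hE.spectrum_loc Sig hSigm q (hS.apply_apply x) l)
    rw [e₂] at this
    refine this.trans ((norm_sub_le _ _).trans (add_le_add (hS.norm_apply_le z) ?_))
    exact (hS.norm_apply_le _).trans (V.le_of_opNorm_le hv p)
  have n₃ : ‖x‖ ≤ ‖p‖ + ‖q‖ := by
    rw [← hx]
    exact norm_add_le _ _
  rw [div_mul_eq_mul_div, div_le_iff₀ (by positivity)]
  have n₄ := mul_le_mul_of_nonneg_left n₃ hD.le
  have n₅ := mul_le_mul_of_nonneg_left n₁ ht0.le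
  have n₆ := mul_le_mul_of_nonneg_left n₂ hv0
  have n₇ := mul_le_mul_of_nonneg_left n₂ hs0.le
  have n₈ := mul_le_mul_of_nonneg_left n₁ hv0
  linarith

/-- An off-diagonal perturbation creates no spectrum in the two outer gaps, at distance more than
`δ` from the convex hull of `σ`. -/
theorem exists_le_norm_of_mem_outer (hE : IsSpectralMeasure A E) (hA : IsSelfAdjoint A)
    (hV : IsSelfAdjoint V) (hσm : MeasurableSet σ) (hSigm : MeasurableSet Sig)
    (hdisj : Disjoint σ Sig) (hspec : spectrum ℝ A = σ ∪ Sig) (hab : a ≤ b)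
    (hσ : σ ⊆ Set.Icc a b) (hSig : ∀ τ ∈ Sig, τ ≤ a - d ∨ b + d ≤ τ) (hd : 0 < d)
    (hoff₁ : E σ * V * E σ = 0) (hoff₂ : E Sig * V * E Sig = 0) (hv : ‖V‖ ≤ v) (hδ0 : 0 ≤ δ)
    (hδ : δ * (δ + d) = v ^ 2)
    (hl : l ∈ Set.Ioo (a - d) (a - δ) ∨ l ∈ Set.Ioo (b + δ) (b + d)) :
    ∃ m : ℝ, 0 < m ∧ ∀ x, m * ‖x‖ ≤ ‖(A + V) x - (l : ℂ) • x‖ := by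
  obtain ⟨R, hR⟩ := (spectrum.isBounded (𝕜 := ℝ) A).subset_closedBall 0
  have hR' : ∀ τ ∈ Sig, -R ≤ τ ∧ τ ≤ R := fun τ hτ => by
    have := hR (hspec ▸ Or.inr hτ : τ ∈ spectrum ℝ A)
    rw [mem_closedBall_zero_iff, Real.norm_eq_abs] at this
    exact abs_le.1 this
  set N := Sig ∩ Set.Iic (a - d) with hN
  set U := Sig ∩ Set.Ici (b + d) with hU
  have hNm : MeasurableSet N := hSigm.inter measurableSet_Iic
  have hUm : MeasurableSet U := hSigm.inter measurableSet_Ici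
  have hUN : Disjoint U N := Set.disjoint_left.2 fun t ht ht' => by
    have h₁ : b + d ≤ t := ht.2
    have h₂ : t ≤ a - d := ht'.2
    linarith
  have hσN : Disjoint σ N := hdisj.mono_right Set.inter_subset_left
  have hσU : Disjoint σ U := hdisj.mono_right Set.inter_subset_left
  have hUNeq : U ∪ N = Sig := by
    ext t
    constructor
    · rintro (h | h) <;> exact h.1
    · intro h
      rcases hSig t h with h' | h'
      · exact Or.inr ⟨h, h'⟩
      · exact Or.inl ⟨h, h'⟩
  have hsum : E σ + E U + E N = 1 := by
    rw [add_assoc, ← hE.map_union hUm hNm hUN, hUNeq]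
    exact hE.map_add_map_of_spectrum_eq hA hσm hSigm hdisj hspec
  have hσf : ∀ x, _ := fun x => hE.re_inner_mem_Icc hA hσm hab hσ
    ((hE.isStarProjection hσm).apply_apply x)
  have hNf : ∀ x, _ := fun x => hE.re_inner_mem_Icc hA hNm (min_le_right (-R) (a - d))
    (fun t ht => ⟨(min_le_left _ _).trans (hR' t ht.1).1, ht.2⟩)
    ((hE.isStarProjection hNm).apply_apply x)
  have hUf : ∀ x, _ := fun x => hE.re_inner_mem_Icc hA hUm (le_max_right R (b + d))
    (fun t ht => ⟨ht.2, (hR' t ht.1).2.trans (le_max_left _ _)⟩)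
    ((hE.isStarProjection hUm).apply_apply x)
  have hVσ : ∀ x, inner ℂ (V (E σ x)) (E σ x) = 0 := fun x =>
    hE.inner_apply_self_of_offDiagonal hσm hoff₁ ((hE.isStarProjection hσm).apply_apply x)
  have hVN : ∀ x, inner ℂ (V (E N x)) (E N x) = 0 := fun x =>
    hE.inner_apply_self_of_offDiagonal hSigm hoff₂
      (hE.apply_of_subset hNm hSigm Set.inter_subset_left x)
  have hVU : ∀ x, inner ℂ (V (E U x)) (E U x) = 0 := fun x =>
    hE.inner_apply_self_of_offDiagonal hSigm hoff₂
      (hE.apply_of_subset hUm hSigm Set.inter_subset_left x)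
  have hAσU : ∀ x, inner ℂ (A (E σ x)) (E U x) = 0 := fun x => by
    rw [hE.apply_comm hσm, hE.inner_apply_apply_of_disjoint hσm hUm hσU]
  have hAσN : ∀ x, inner ℂ (A (E σ x)) (E N x) = 0 := fun x => by
    rw [hE.apply_comm hσm, hE.inner_apply_apply_of_disjoint hσm hNm hσN]
  rcases hl with ⟨hl₁, hl₂⟩ | ⟨hl₁, hl₂⟩
  · refine ⟨min (a - δ - l) (l - (a - d)), lt_min (by linarith) (by linarith), fun x => ?_⟩
    have hx : E σ x + E U x + E N x = x := by
      rw [← add_apply, ← add_apply, hsum, one_apply_eq_self]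
    have := le_norm_add_sub_smul hA hV (hE.inner_apply_apply_of_disjoint hσm hNm hσN x x)
      (hE.inner_apply_apply_of_disjoint hUm hNm hUN x x)
      (hE.inner_apply_apply_of_disjoint hσm hUm hσU x x) (hAσU x) (hVσ x) (hVU x) (hVN x)
      (hσf x).1 (le_trans (by gcongr) (hUf x).1) (hNf x).2 hv hδ0 hd hδ
      (min_le_left _ _) (min_le_right (a - δ - l) (l - (a - d)))
    rwa [hx] at this
  · refine ⟨min (l - b - δ) (b + d - l), lt_min (by linarith) (by linarith), fun x => ?_⟩
    have hx : E σ x + E N x + E U x = x := by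
      rw [add_right_comm, ← add_apply, ← add_apply, hsum, one_apply_eq_self]
    have := le_norm_add_sub_smul (A := -A) (V := -V) (a := -b) (l := -l)
      (m := min (l - b - δ) (b + d - l)) hA.neg hV.neg
      (hE.inner_apply_apply_of_disjoint hσm hUm hσU x x)
      (hE.inner_apply_apply_of_disjoint hNm hUm hUN.symm x x)
      (hE.inner_apply_apply_of_disjoint hσm hNm hσN x x) (by simpa using hAσN x)
      (by simpa using hVσ x) (by simpa using hVN x) (by simpa using hVU x)
      (by simpa using (hσf x).2) ?_ ?_ (by rwa [norm_neg]) hδ0 hd hδ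
      ((min_le_left _ _).trans (by linarith)) ((min_le_right _ _).trans (by linarith))
    · rw [hx] at this
      refine this.trans_eq ?_
      rw [← norm_neg]
      congr 1
      simp only [add_apply, neg_apply, Complex.ofReal_neg, neg_smul]
      abel
    · rw [neg_apply, inner_neg_left, Complex.neg_re, le_neg]
      refine (hNf x).2.trans ?_
      rw [← neg_mul]
      gcongr
      linarith
    · rw [neg_apply, inner_neg_left, Complex.neg_re, neg_le]
      refine le_trans (le_of_eq ?_) (hUf x).1
      ring

/-- For an off-diagonal perturbation `V` of `A`, the part of the spectrum of `A + V` inside the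
gap of `Sig` around `σ` stays within distance `δ` of `σ`; quantitatively, `A + V - l` is
bounded below at every other point `l` of the gap. -/
theorem exists_le_norm_of_lt_infDist (hE : IsSpectralMeasure A E) (hA : IsSelfAdjoint A)
    (hV : IsSelfAdjoint V) (hσm : MeasurableSet σ) (hSigm : MeasurableSet Sig)
    (hspec : spectrum ℝ A = σ ∪ Sig) (hSigne : Sig.Nonempty) (haσ : a ∈ σ) (hbσ : b ∈ σ)
    (hσ : σ ⊆ Set.Icc a b) (hSig : ∀ τ ∈ Sig, τ ≤ a - d ∨ b + d ≤ τ) (hd : 0 < d)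
    (hoff₁ : E σ * V * E σ = 0) (hoff₂ : E Sig * V * E Sig = 0) (hv : ‖V‖ ≤ v) (hδ0 : 0 ≤ δ)
    (hδ : δ * (δ + d) = v ^ 2) (hl : l ∈ Set.Ioo (a - d) (b + d))
    (hs : δ < Metric.infDist l σ) :
    ∃ m : ℝ, 0 < m ∧ ∀ x, m * ‖x‖ ≤ ‖(A + V) x - (l : ℂ) • x‖ := by
  have hab : a ≤ b := (hσ haσ).2
  have hdisj : Disjoint σ Sig := Set.disjoint_left.2 fun t ht ht' => by
    have h₁ := hσ ht
    rcases hSig t ht' with h₂ | h₂ <;> linarith [h₁.1, h₁.2]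
  have hsa : Metric.infDist l σ ≤ |l - a| := by
    simpa [Real.dist_eq] using Metric.infDist_le_dist_of_mem (x := l) haσ
  have hsb : Metric.infDist l σ ≤ |l - b| := by
    simpa [Real.dist_eq] using Metric.infDist_le_dist_of_mem (x := l) hbσ
  rcases lt_or_ge l a with hla | hla
  · rw [abs_of_neg (by linarith)] at hsa
    exact hE.exists_le_norm_of_mem_outer hA hV hσm hSigm hdisj hspec hab hσ hSig hd hoff₁ hoff₂
      hv hδ0 hδ (Or.inl ⟨hl.1, by linarith⟩)
  rcases lt_or_ge b l with hlb | hlb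
  · rw [abs_of_pos (by linarith)] at hsb
    exact hE.exists_le_norm_of_mem_outer hA hV hσm hSigm hdisj hspec hab hσ hSig hd hoff₁ hoff₂
      hv hδ0 hδ (Or.inr ⟨by linarith, hl.2⟩)
  rw [abs_of_nonneg (by linarith)] at hsa
  rw [abs_of_nonpos (by linarith)] at hsb
  have hs0 : 0 < Metric.infDist l σ := hδ0.trans_lt hs
  refine hE.exists_le_norm_of_lt_mul (s := Metric.infDist l σ) (t := Metric.infDist l σ + d)
    hσm hSigm hdisj (hE.map_add_map_of_spectrum_eq hA hσm hSigm hdisj hspec) hoff₁ hoff₂ hs0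
    (by linarith) le_rfl ?_ hv (by rw [← hδ]; nlinarith)
  rw [Metric.le_infDist hSigne]
  intro τ hτ
  rw [Real.dist_eq]
  rcases hSig τ hτ with h | h
  · exact (by linarith : _ ≤ l - τ).trans (le_abs_self _)
  · exact (by linarith : _ ≤ -(l - τ)).trans (neg_le_abs _)

end IsSpectralMeasure

end OffDiagonal

section Reals

variable {v d δ : ℝ}

theorem mul_tan_half_arctan_mul_add (hd : 0 < d)
    (hδ : δ = v * Real.tan (Real.arctan (2 * v / d) / 2)) : δ * (δ + d) = v ^ 2 := by
  set θ := Real.arctan (2 * v / d) / 2 with hθ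
  have h₁ := Real.arctan_lt_pi_div_two (2 * v / d)
  have h₂ := Real.neg_pi_div_two_lt_arctan (2 * v / d)
  have hc : 0 < Real.cos θ := Real.cos_pos_of_mem_Ioo ⟨by linarith, by linarith⟩
  have hc₂ : 0 < Real.cos (2 * θ) := Real.cos_pos_of_mem_Ioo ⟨by linarith, by linarith⟩
  have htan : Real.tan (2 * θ) = 2 * v / d := by
    rw [show 2 * θ = Real.arctan (2 * v / d) by rw [hθ]; ring, Real.tan_arctan]
  rw [Real.tan_eq_sin_div_cos, div_eq_div_iff hc₂.ne' hd.ne', Real.sin_two_mul,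
    Real.cos_two_mul'] at htan
  rw [Real.tan_eq_sin_div_cos] at hδ
  have hδc : δ * Real.cos θ = v * Real.sin θ := by
    rw [hδ]
    field_simp
  have h : Real.cos θ ^ 2 * (δ * (δ + d)) = Real.cos θ ^ 2 * v ^ 2 := by
    linear_combination (δ * Real.cos θ + v * Real.sin θ + d * Real.cos θ) * hδc + v / 2 * htan
  exact mul_left_cancel₀ (by positivity) h

theorem mul_tan_half_arctan_nonneg (hv : 0 ≤ v) (hd : 0 < d) :
    0 ≤ v * Real.tan (Real.arctan (2 * v / d) / 2) := by
  have h₁ := Real.arctan_lt_pi_div_two (2 * v / d)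
  have h₂ : 0 ≤ Real.arctan (2 * v / d) := Real.arctan_nonneg.2 (by positivity)
  exact mul_nonneg hv (Real.tan_nonneg_of_nonneg_of_le_pi_div_two (by linarith) (by linarith))

theorem sin_arctan_lt_one (x : ℝ) : Real.sin (Real.arctan x) < 1 := by
  nlinarith [Real.sin_sq_add_cos_sq (Real.arctan x), Real.cos_arctan_pos x]

theorem sq_mul_one_sub_sin_arctan_sq {g : ℝ} (hg : g ≠ 0) :
    v ^ 2 * (1 - Real.sin (Real.arctan (v / g)) ^ 2) =
      (g * Real.sin (Real.arctan (v / g))) ^ 2 := by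
  have h := Real.tan_arctan (v / g)
  rw [Real.tan_eq_sin_div_cos, div_eq_div_iff (Real.cos_arctan_pos _).ne' hg] at h
  rw [← Real.cos_sq', mul_comm g, h]
  ring

end Reals

/-- A spectral projection onto a set inside the ball of radius `ρ₁` around `c`, complementary to
one outside the ball of radius `ρ₂`, splits the operator shifted by `c`. -/
theorem IsSpectralMeasure.splitsAt {H : Type*} [NormedAddCommGroup H] [InnerProductSpace ℂ H]
    [CompleteSpace H] {T : H →L[ℂ] H} {E : Set ℝ → H →L[ℂ] H} (hE : IsSpectralMeasure T E)
    (hT : IsSelfAdjoint T) {Δ Δ' : Set ℝ} (hΔ : MeasurableSet Δ) (hΔ' : MeasurableSet Δ')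
    (hsum : E Δ + E Δ' = 1) {c ρ₁ ρ₂ : ℝ} (h0 : 0 ≤ ρ₁) (hin : Δ ⊆ Metric.closedBall c ρ₁)
    (hne : Δ'.Nonempty) (hout : ∀ τ ∈ Δ', ρ₂ ≤ dist c τ) :
    SplitsAt (T - algebraMap ℝ (H →L[ℂ] H) c) (E Δ) ρ₁ ρ₂ where
  isStarProjection := hE.isStarProjection hΔ
  commute := (hE.commutes Δ hΔ).sub_left (Algebra.commutes _ _)
  norm_le x := by
    have := hE.norm_sub_smul_le hT hΔ h0 hin ((hE.isStarProjection hΔ).apply_apply x)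
    simpa [Algebra.algebraMap_eq_smul_one] using this
  le_norm x := by
    have hx : x - E Δ x = E Δ' x := by
      rw [sub_eq_iff_eq_add', ← add_apply, hsum, one_apply_eq_self]
    have := hE.spectrum_loc Δ' hΔ' (E Δ' x) ((hE.isStarProjection hΔ').apply_apply x) c
    refine (mul_le_mul_of_nonneg_right ((Metric.le_infDist hne).2 fun τ hτ => hout τ hτ)
      (norm_nonneg (x - E Δ x))).trans ?_
    rw [hx]
    simpa [Algebra.algebraMap_eq_smul_one] using this

theorem exists_subset_Icc_of_convexHull_disjoint {σ Sig : Set ℝ} (hσ : IsCompact σ)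
    (hconv : Disjoint (convexHull ℝ σ) Sig) {d : ℝ} (hd : d = sInf (Set.image2 dist σ Sig))
    (hd0 : 0 < d) : ∃ a ∈ σ, ∃ b ∈ σ, σ ⊆ Set.Icc a b ∧ ∀ τ ∈ Sig, τ ≤ a - d ∨ b + d ≤ τ := by
  have hne : σ.Nonempty := by
    by_contra! h
    simp [h] at hd
    linarith
  obtain ⟨a, haσ, ha⟩ := hσ.exists_isLeast hne
  obtain ⟨b, hbσ, hb⟩ := hσ.exists_isGreatest hne
  refine ⟨a, haσ, b, hbσ, fun t ht => ⟨ha ht, hb ht⟩, fun τ hτ => ?_⟩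
  have hle : ∀ s ∈ σ, d ≤ |s - τ| := fun s hs => by
    rw [hd, ← Real.dist_eq]
    refine csInf_le ⟨0, ?_⟩ (Set.mem_image2_of_mem hs hτ)
    rintro _ ⟨_, _, _, _, rfl⟩
    exact dist_nonneg
  have hτ' : τ ∉ Set.Icc a b := fun h => by
    rw [← segment_eq_Icc (ha hbσ)] at h
    exact Set.disjoint_left.1 hconv (segment_subset_convexHull haσ hbσ h) hτ
  rcases lt_or_ge τ a with h | h
  · have := hle a haσ
    rw [abs_of_pos (by linarith)] at this
    exact Or.inl (by linarith)
  · have hb' : b < τ := by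
      by_contra! h'
      exact hτ' ⟨h, h'⟩
    have := hle b hbσ
    rw [abs_of_neg (by linarith)] at this
    exact Or.inr (by linarith)

/-- **Theorem B (ii) / Theorem 2.9.** If the convex hull of `σ` does not intersect `Σ` and
`‖V‖ < √2 d`, then `‖E_A(σ) − E_B(O_d(σ))‖ ≤ sin(arctan(‖V‖/(d − δ_V))) < 1`, where
`δ_V = ‖V‖ tan((1/2) arctan(2‖V‖/d))`. -/
theorem norm_diff_projections_le_sin_arctan_of_convexHull_disjoint
    {H : Type*} [NormedAddCommGroup H] [InnerProductSpace ℂ H] [CompleteSpace H]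
    [TopologicalSpace.SeparableSpace H]
    (A V B : H →L[ℂ] H) (hA : IsSelfAdjoint A) (hV : IsSelfAdjoint V) (hB : B = A + V)
    (σ Sig : Set ℝ) (hσc : IsClosed σ) (hSigc : IsClosed Sig) (hdisj : Disjoint σ Sig)
    (hspec : spectrum ℝ A = σ ∪ Sig)
    (d : ℝ) (hd : d = sInf (Set.image2 dist σ Sig)) (hd0 : 0 < d)
    (EA EB : Set ℝ → H →L[ℂ] H) (hEA : IsSpectralMeasure A EA) (hEB : IsSpectralMeasure B EB)
    (hoff₁ : EA σ * V * EA σ = 0) (hoff₂ : EA Sig * V * EA Sig = 0)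
    (hconv : Disjoint (convexHull ℝ σ) Sig)
    (δ : ℝ) (hδ : δ = ‖V‖ * Real.tan (Real.arctan (2 * ‖V‖ / d) / 2))
    (hnorm : ‖V‖ < Real.sqrt 2 * d) :
    ‖EA σ - EB (Metric.thickening d σ)‖ ≤ Real.sin (Real.arctan (‖V‖ / (d - δ))) ∧
    Real.sin (Real.arctan (‖V‖ / (d - δ))) < 1 := by
  subst hB
  have hσ : IsCompact σ := (spectrum.isCompact (𝕜 := ℝ) A).of_isClosed_subset hσc
    (hspec ▸ Set.subset_union_left)
  obtain ⟨a, haσ, b, hbσ, hσab, hSig⟩ :=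
    exists_subset_Icc_of_convexHull_disjoint hσ hconv hd hd0
  have hSigne : Sig.Nonempty := by
    by_contra! h
    simp [h] at hd
    linarith
  have hσne : σ.Nonempty := ⟨a, haσ⟩
  have hab : a ≤ b := (hσab haσ).2
  have hσm := hσc.measurableSet
  have hSigm := hSigc.measurableSet
  have hδ0 : 0 ≤ δ := hδ ▸ mul_tan_half_arctan_nonneg (norm_nonneg V) hd0
  have hδv : δ * (δ + d) = ‖V‖ ^ 2 := mul_tan_half_arctan_mul_add hd0 hδ
  have hδd : δ < d := by
    have h₁ : ‖V‖ ^ 2 < 2 * d ^ 2 := by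
      have := pow_lt_pow_left₀ hnorm (norm_nonneg V) two_ne_zero
      rwa [mul_pow, Real.sq_sqrt zero_le_two] at this
    nlinarith
  refine ⟨?_, sin_arctan_lt_one _⟩
  have hgap : ∀ t ∈ Set.Icc (0 : ℝ) 1, ∀ l ∈ Set.Ioo (a - d) (b + d), δ < Metric.infDist l σ →
      ∃ m : ℝ, 0 < m ∧ ∀ x, m * ‖x‖ ≤ ‖(A + (t : ℂ) • V) x - (l : ℂ) • x‖ := by
    intro t ht l hl hs
    have htV : IsSelfAdjoint ((t : ℂ) • V) := IsSelfAdjoint.smul (Complex.conj_ofReal t) hV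
    refine hEA.exists_le_norm_of_lt_infDist hA htV hσm hSigm hspec hSigne haσ hbσ hσab hSig hd0
      (by simp [hoff₁]) (by simp [hoff₂]) ?_ hδ0 hδv hl hs
    rw [norm_smul, Complex.norm_real, Real.norm_eq_abs, abs_of_nonneg ht.1]
    exact mul_le_of_le_one_left (norm_nonneg V) ht.2
  have hfar : ∀ l, l < a - δ ∨ b + δ < l → δ < Metric.infDist l σ := by
    intro l hl
    obtain ⟨s, hs, hsl⟩ := hσ.exists_infDist_eq_dist hσne l
    rw [hsl, Real.dist_eq]
    have := hσab hs
    rcases hl with hl | hl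
    · exact (by linarith [this.1] : δ < -(l - s)).trans_le (neg_le_abs _)
    · exact (by linarith [this.2] : δ < l - s).trans_le (le_abs_self _)
  set c := (a + b) / 2 with hc
  set r := (b - a) / 2 with hr
  have hr0 : 0 ≤ r := by linarith
  have hsum : EA σ + EA Sig = 1 := hEA.map_add_map_of_spectrum_eq hA hσm hSigm hdisj hspec
  have hSA := hEA.splitsAt hA hσm hSigm hsum (c := c) (ρ₁ := r) (ρ₂ := r + d) hr0
    (by rwa [← Real.Icc_eq_closedBall]) hSigne (by
      intro τ hτ
      rw [Real.dist_eq]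
      rcases hSig τ hτ with h | h
      · exact (by linarith : r + d ≤ c - τ).trans (le_abs_self _)
      · exact (by linarith : r + d ≤ -(c - τ)).trans (neg_le_abs _))
  have hAV : IsSelfAdjoint (A + V) := hA.add hV
  have hSB : SplitsAt (A - algebraMap ℝ (H →L[ℂ] H) c + V) (EB (Metric.thickening d σ))
      (r + δ) (r + d) := by
    have hnot : ∀ l ∈ Set.Ioo (a - d) (b + d), δ < Metric.infDist l σ →
        l ∉ spectrum ℝ (A + V) := by
      intro l hl hs
      obtain ⟨m, hm, h⟩ := hgap 1 (by simp) l hl hs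
      exact hAV.notMem_spectrum_of_le_norm hm (by simpa using h)
    have hOm : MeasurableSet (Metric.thickening d σ) := Metric.isOpen_thickening.measurableSet
    have hO : Metric.thickening d σ ⊆ Set.Ioo (a - d) (b + d) := by
      intro l hl
      obtain ⟨s, hs, hsl⟩ := Metric.mem_thickening_iff.1 hl
      rw [Real.dist_eq, abs_lt] at hsl
      have := hσab hs
      exact ⟨by linarith [this.1, hsl.1], by linarith [this.2, hsl.2]⟩
    have hin : EB (Metric.thickening d σ ∩ Set.Icc (a - δ) (b + δ)) =
        EB (Metric.thickening d σ) := by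
      refine hEB.map_congr (hOm.inter measurableSet_Icc) hOm Set.inter_subset_left
        (hEB.map_eq_zero_of_disjoint_spectrum hAV (hOm.diff (hOm.inter measurableSet_Icc)) ?_)
      refine Set.disjoint_left.2 fun l hl => hnot l (hO hl.1) (hfar l ?_)
      by_contra! h
      exact hl.2 ⟨hl.1, h⟩
    have hout : EB (Set.Ioo (a - d) (b + d))ᶜ = EB (Metric.thickening d σ)ᶜ := by
      have hI : MeasurableSet (Set.Ioo (a - d) (b + d)) := measurableSet_Ioo
      refine hEB.map_congr hI.compl hOm.compl (Set.compl_subset_compl.2 hO)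
        (hEB.map_eq_zero_of_disjoint_spectrum hAV (hOm.compl.diff hI.compl) ?_)
      refine Set.disjoint_left.2 fun l hl => hnot l (not_not.1 hl.2) ?_
      refine hδd.trans_le (not_lt.1 fun h => hl.1 ?_)
      exact (Metric.mem_thickening_iff_infDist_lt hσne).2 h
    have := hEB.splitsAt hAV (hOm.inter measurableSet_Icc)
      (measurableSet_Ioo (a := a - d) (b := b + d)).compl (c := c) (ρ₁ := r + δ) (ρ₂ := r + d)
      (by rw [hin, hout, hEB.map_compl hOm, add_sub_cancel]) (by linarith)
      (fun l hl => by
        rw [Metric.mem_closedBall, Real.dist_eq, abs_le]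
        exact ⟨by linarith [hl.2.1], by linarith [hl.2.2]⟩)
      ⟨b + d, fun h => lt_irrefl _ h.2⟩ (by
        intro τ hτ
        rw [Real.dist_eq]
        rcases le_or_gt τ (a - d) with h | h
        · exact (by linarith : r + d ≤ c - τ).trans (le_abs_self _)
        · have h' : b + d ≤ τ := not_lt.1 fun h' => hτ ⟨h, h'⟩
          exact (by linarith : r + d ≤ -(c - τ)).trans (neg_le_abs _))
    rwa [hin, add_sub_right_comm] at this
  have hex : ∀ t ∈ Set.Icc (0 : ℝ) 1, ∃ R,
      SplitsAt (A - algebraMap ℝ (H →L[ℂ] H) c + (t : ℂ) • V) R (r + δ) (r + d) := by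
    intro t ht
    have hsa : IsSelfAdjoint (A - algebraMap ℝ (H →L[ℂ] H) c + (t : ℂ) • V) :=
      (hA.sub (IsSelfAdjoint.algebraMap _ (IsSelfAdjoint.all c))).add
        (IsSelfAdjoint.smul (Complex.conj_ofReal t) hV)
    refine hsa.exists_splitsAt (by linarith) (by linarith) fun μ hμ => ?_
    by_contra! h
    have h₂ := abs_lt.1 h.2
    obtain ⟨m, hm, hle⟩ := hgap t ht (μ + c) ⟨by linarith, by linarith⟩ (hfar _ (by
      rcases lt_abs.1 h.1 with h₁ | h₁
      · exact Or.inr (by linarith)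
      · exact Or.inl (by linarith)))
    refine hsa.notMem_spectrum_of_le_norm hm (fun x => (hle x).trans_eq ?_) hμ
    congr 1
    simp [Algebra.algebraMap_eq_smul_one, add_smul]
    abel
  have hκ := sq_mul_one_sub_sin_arctan_sq (v := ‖V‖) (sub_pos.2 hδd).ne'
  refine hSA.norm_sub_le_of_offDiagonal (by linarith) hSB (by linarith) (by linarith) hex ?_ le_rfl
    (Real.sin_arctan_nonneg.2 (div_nonneg (norm_nonneg V) (by linarith))) (sin_arctan_lt_one _) ?_
  · rw [← hsum, add_sub_cancel_left, hoff₂]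
  · rw [hκ, add_sub_add_left_eq_sub]
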